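/- Let d ≥ 0 and let ν_0 ≥ ν_1 ≥ … ≥ ν_d ≥ 0 be a decreasing sequence of nonnegative real numbers. Set α_i := (√(i+1) − √i)·√(ν_i) for 0 ≤ i ≤ d. Then Σ_{i=0}^{d} ν_i ≤ ( Σ_{i=0}^{d} α_i )². -/

import Mathlib

open Finset

/-!
Writing `Sₙ = ∑_{i < n} (p (i + 1) - p i) * x i` for a nondecreasing `p` with `p 0 = 0`,
antitonicity of `x` gives `p n * x n ≤ Sₙ`. Since `t ↦ (t + c) ^ r - t ^ r` is nondecreasing on
`t ≥ 0`, passing from `Sₙ` to `Sₙ₊₁ = Sₙ + (p (n + 1) - p n) * x n` raises the `r`-th power by at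
least `(p (n + 1) * x n) ^ r - (p n * x n) ^ r`. The theorem is the case `r = 2`, `p n = √n`,
`x n = √(ν n)`, where these lower bounds are exactly the `ν n`.
-/

section WeightedSums

variable {R : Type*} [CommRing R] [PartialOrder R] [IsOrderedRing R]

theorem add_pow_sub_pow_le_add_pow_sub_pow {a b c : R} (ha : 0 ≤ a) (hab : a ≤ b) (hc : 0 ≤ c)
    (r : ℕ) : (a + c) ^ r - a ^ r ≤ (b + c) ^ r - b ^ r := by
  have factor (t : R) :
      (t + c) ^ r - t ^ r = c * ∑ i ∈ range r, (t + c) ^ i * t ^ (r - 1 - i) := by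
    rw [← (Commute.all _ _).mul_geom_sum₂, add_sub_cancel_left]
  have hb : 0 ≤ b := ha.trans hab
  rw [factor, factor]
  gcongr

theorem sub_mul_le_sum_range_sub_mul {p x : ℕ → R} {n : ℕ} (hp : Monotone p)
    (hx : AntitoneOn x (Set.Iic n)) :
    (p n - p 0) * x n ≤ ∑ i ∈ range n, (p (i + 1) - p i) * x i := by
  rw [← sum_range_sub, sum_mul]
  refine sum_le_sum fun i hi ↦ ?_
  have hin : i ≤ n := (mem_range.mp hi).le
  exact mul_le_mul_of_nonneg_left (hx hin Set.self_mem_Iic hin) (sub_nonneg.mpr (hp i.le_succ))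

theorem sum_range_pow_sub_pow_mul_pow_le {p x : ℕ → R} {n : ℕ} (hp : Monotone p) (hp0 : p 0 = 0)
    (hx : AntitoneOn x (Set.Iio n)) (hx0 : ∀ i < n, 0 ≤ x i) (r : ℕ) :
    ∑ i ∈ range n, (p (i + 1) ^ r - p i ^ r) * x i ^ r ≤
      (∑ i ∈ range n, (p (i + 1) - p i) * x i) ^ r := by
  induction n with
  | zero => simp only [range_zero, sum_empty, pow_nonneg le_rfl]
  | succ n ih =>
    have ih := ih (hx.mono (Set.Iio_subset_Iio n.le_succ))
      fun i hi ↦ hx0 i (hi.trans n.lt_succ_self)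
    have hxn : 0 ≤ x n := hx0 n n.lt_succ_self
    have hpn : 0 ≤ p n := hp0 ▸ hp n.zero_le
    rw [sum_range_succ, sum_range_succ]
    set S := ∑ i ∈ range n, (p (i + 1) - p i) * x i
    have hS : p n * x n ≤ S := by
      simpa only [hp0, sub_zero] using
        sub_mul_le_sum_range_sub_mul hp (hx.mono fun i hi ↦ Nat.lt_succ_of_le hi)
    have increment : (p (n + 1) ^ r - p n ^ r) * x n ^ r ≤
        (S + (p (n + 1) - p n) * x n) ^ r - S ^ r :=
      calc (p (n + 1) ^ r - p n ^ r) * x n ^ r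
          = (p n * x n + (p (n + 1) - p n) * x n) ^ r - (p n * x n) ^ r := by
            rw [← add_mul, add_sub_cancel, mul_pow, mul_pow, sub_mul]
        _ ≤ (S + (p (n + 1) - p n) * x n) ^ r - S ^ r :=
            add_pow_sub_pow_le_add_pow_sub_pow (mul_nonneg hpn hxn) hS
              (mul_nonneg (sub_nonneg.mpr (hp n.le_succ)) hxn) r
    exact (add_le_add ih increment).trans_eq (add_sub_cancel _ _)

end WeightedSums

/-- For a decreasing sequence `ν_0 ≥ ν_1 ≥ … ≥ ν_d ≥ 0` of nonnegative
reals and `α_i = (√(i+1) - √i)·√(ν_i)`, one has `Σ_{i=0}^d ν_i ≤ (Σ_{i=0}^d α_i)²`. -/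
theorem stmt11 (d : ℕ) (ν : ℕ → ℝ)
    (hνdec : ∀ i < d, ν (i + 1) ≤ ν i) (hνnn : ∀ i ≤ d, 0 ≤ ν i) :
    ∑ i ∈ Finset.range (d + 1), ν i ≤
      (∑ i ∈ Finset.range (d + 1),
        (Real.sqrt ((i : ℝ) + 1) - Real.sqrt (i : ℝ)) * Real.sqrt (ν i)) ^ 2 := by
  have sqrt_mono : Monotone fun i : ℕ ↦ √(i : ℝ) := Real.sqrt_monotone.comp Nat.mono_cast
  have ν_anti : AntitoneOn ν (Set.Iio (d + 1)) :=
    antitoneOn_of_succ_le Set.ordConnected_Iio fun i _ _ hi ↦ hνdec i (Nat.lt_of_succ_lt_succ hi)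
  have sqrt_ν_anti : AntitoneOn (fun i ↦ √(ν i)) (Set.Iio (d + 1)) :=
    Real.sqrt_monotone.comp_antitoneOn ν_anti
  have summand_eq (i : ℕ) (hi : i ∈ range (d + 1)) :
      (√((i + 1 : ℕ) : ℝ) ^ 2 - √(i : ℝ) ^ 2) * √(ν i) ^ 2 = ν i := by
    rw [Real.sq_sqrt (Nat.cast_nonneg _), Real.sq_sqrt (Nat.cast_nonneg _),
      Real.sq_sqrt (hνnn i (mem_range_succ_iff.mp hi)), Nat.cast_succ, add_sub_cancel_left, one_mul]
  rw [← sum_congr rfl summand_eq]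
  simpa only [Nat.cast_succ] using sum_range_pow_sub_pow_mul_pow_le sqrt_mono
    (by rw [Nat.cast_zero, Real.sqrt_zero]) sqrt_ν_anti (fun i _ ↦ Real.sqrt_nonneg (ν i)) 2
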